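/- arXiv:2303.14161 — 6 statements merged into one kernel-verified Lean document; each statement's English description precedes it below -/
import Mathlib

section
/- For any vectors u, v ∈ ℝ^k, let sort(u) denote the vector obtained from u by writing its coordinates in increasing order (and likewise sort(v)). Then ‖sort(u) − sort(v)‖_∞ ≤ ‖u − v‖_∞, where ‖w‖_∞ = max over i of |w_i|. -/
/-!
Let `w↑` be the increasing rearrangement of `w`, with positions counted from `0`. The `i + 1`
coordinates that fill positions `0, …, i` of `v↑` cannot all fall into the `i` positions before `i`
of `u↑`, so one of them, `j`, satisfies both `u↑ i ≤ u j` and `v j ≤ v↑ i`. Hence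
`u↑ i - v↑ i ≤ u j - v j`, and exchanging `u` and `v` bounds the absolute value.
-/

open Function

section Rearrangement

variable {ι κ α β : Type*} [LinearOrder ι] {i : ι}

theorem exists_le_le_apply_of_injective {f : ι → ι} (hf : Injective f)
    (hi : (Set.Iic i).Finite) : ∃ j ≤ i, i ≤ f j := by
  by_contra! hlt
  have hmaps : Set.MapsTo f (Set.Iic i) (Set.Iic i) := fun j hj ↦ (hlt j hj).le
  have hbij : Set.BijOn f (Set.Iic i) (Set.Iic i) :=
    (hi.injOn_iff_bijOn_of_mapsTo hmaps).1 hf.injOn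
  obtain ⟨j, hj, hji⟩ := hbij.surjOn Set.self_mem_Iic
  exact (hlt j hj).ne hji

theorem exists_apply_le_and_apply_le_of_monotone_comp [Preorder α] [Preorder β]
    {u : κ → α} {v : κ → β} {σ τ : ι ≃ κ} (hu : Monotone (u ∘ σ)) (hv : Monotone (v ∘ τ))
    (hi : (Set.Iic i).Finite) : ∃ j, u (σ i) ≤ u j ∧ v j ≤ v (τ i) := by
  obtain ⟨l, hl, hil⟩ := exists_le_le_apply_of_injective (τ.trans σ.symm).injective hi
  refine ⟨τ l, ?_, hv hl⟩
  simpa using hu hil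

theorem exists_abs_sub_le_abs_sub_of_monotone_comp
    [AddCommGroup α] [LinearOrder α] [IsOrderedAddMonoid α]
    {u v : κ → α} {σ τ : ι ≃ κ} (hu : Monotone (u ∘ σ)) (hv : Monotone (v ∘ τ))
    (hi : (Set.Iic i).Finite) : ∃ j, |u (σ i) - v (τ i)| ≤ |u j - v j| := by
  rcases le_total (v (τ i)) (u (σ i)) with hvu | huv
  · obtain ⟨j, huj, hvj⟩ := exists_apply_le_and_apply_le_of_monotone_comp hu hv hi
    refine ⟨j, ?_⟩
    rw [abs_of_nonneg (sub_nonneg.2 hvu)]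
    exact (sub_le_sub huj hvj).trans (le_abs_self _)
  · obtain ⟨j, hvj, huj⟩ := exists_apply_le_and_apply_le_of_monotone_comp hv hu hi
    refine ⟨j, ?_⟩
    rw [abs_sub_comm, abs_of_nonneg (sub_nonneg.2 huv), abs_sub_comm (u j)]
    exact (sub_le_sub hvj huj).trans (le_abs_self _)

theorem norm_sub_sort_le_norm_sub_general {E : Type*} [Fintype ι] [Fintype κ]
    [NormedAddCommGroup E] [LinearOrder E] [IsOrderedAddMonoid E] [HasSolidNorm E]
    {u v : κ → E} {σ τ : ι ≃ κ} (hu : Monotone (u ∘ σ)) (hv : Monotone (v ∘ τ)) :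
    ‖u ∘ σ - v ∘ τ‖ ≤ ‖u - v‖ := by
  refine (pi_norm_le_iff_of_nonneg (norm_nonneg _)).2 fun i ↦ ?_
  obtain ⟨j, hj⟩ := exists_abs_sub_le_abs_sub_of_monotone_comp hu hv (Set.toFinite (Set.Iic i))
  calc ‖u (σ i) - v (τ i)‖ ≤ ‖u j - v j‖ := norm_le_norm_of_abs_le_abs hj
    _ ≤ ‖u - v‖ := norm_le_pi_norm (u - v) j

end Rearrangement

/-- Rewriting the coordinates of two vectors `u, v ∈ ℝ^k` in increasing order
does not increase the `L∞` distance `‖u - v‖_∞` (the sup norm on `Fin k → ℝ`). -/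
theorem norm_sub_sort_le_norm_sub (k : ℕ) (u v : Fin k → ℝ) :
    ‖(u ∘ ⇑(Tuple.sort u)) - (v ∘ ⇑(Tuple.sort v))‖ ≤ ‖u - v‖ :=
  norm_sub_sort_le_norm_sub_general (Tuple.monotone_sort u) (Tuple.monotone_sort v)
end

section
/- Let D, D' : Fin h → Fin h → ℝ be symmetric matrices with zero diagonal. Let SDV(D) ∈ ℝ^{h(h−1)/2} be the vector of the strictly upper-triangular entries D i j (i < j) written in increasing order, and likewise SDV(D'). Then min over permutations ξ of Fin h of max over i < j of |D (ξ i) (ξ j) − D' i j| ≥ ‖SDV(D) − SDV(D')‖_∞. -/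
/-!
Relabelling the indices of a symmetric matrix only permutes its upper-triangular entries, so it
leaves the sorted distance vector unchanged. It therefore suffices to bound `‖SDV D - SDV D'‖` by
the largest entrywise difference of `D` and `D'` with the labels as they are, that is, to show that
sorting does not increase the sup distance `c` of two tuples. Adding `c` to one tuple makes it
dominate the other, and sorting preserves domination: by pigeonhole, a permutation `τ` sends some
index `i ≤ k` to an index `≥ k`, so if `f` and `g` are monotone and `f ∘ τ ≤ g`, then
`f k ≤ f (τ i) ≤ g i ≤ g k`.
-/

/-- The Sorted Distance Vector of a matrix `D : Fin h → Fin h → ℝ`: the vector of the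
`h(h-1)/2` strictly upper-triangular entries `D i j` (`i < j`) written in increasing order,
indexed by `Fin` of the number of strictly increasing pairs in `Fin h × Fin h`. -/
noncomputable def SDV {h : ℕ} (D : Fin h → Fin h → ℝ) :
    Fin (Fintype.card {p : Fin h × Fin h // p.1 < p.2}) → ℝ :=
  let v : Fin (Fintype.card {p : Fin h × Fin h // p.1 < p.2}) → ℝ := fun i =>
    D ((Fintype.equivFin {p : Fin h × Fin h // p.1 < p.2}).symm i).1.1
      ((Fintype.equivFin {p : Fin h × Fin h // p.1 < p.2}).symm i).1.2
  v ∘ ⇑(Tuple.sort v)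

section Sorting

theorem exists_le_and_le_apply_of_injective {ι : Type*} [LinearOrder ι] [LocallyFiniteOrderBot ι]
    {τ : ι → ι} (hτ : Function.Injective τ) (k : ι) : ∃ i ≤ k, k ≤ τ i := by
  by_contra! hlt
  have hmaps : Set.MapsTo τ (Finset.Iic k) (Finset.Iio k) := fun i hi => by
    simpa using hlt i (by simpa using hi)
  have hcard : (Finset.Iic k).card ≤ (Finset.Iio k).card :=
    Finset.card_le_card_of_injOn τ hmaps hτ.injOn
  have hssub : Finset.Iio k ⊂ Finset.Iic k := by
    simpa [← Finset.coe_ssubset] using Set.Iio_ssubset_Iic_self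
  exact (Finset.card_lt_card hssub).not_ge hcard

theorem le_of_monotone_of_comp_injective_le {ι α : Type*} [LinearOrder ι]
    [LocallyFiniteOrderBot ι] [Preorder α] {f g : ι → α} (hf : Monotone f) (hg : Monotone g)
    {τ : ι → ι} (hτ : Function.Injective τ) (hfg : f ∘ τ ≤ g) : f ≤ g := fun k => by
  obtain ⟨i, hik, hki⟩ := exists_le_and_le_apply_of_injective hτ k
  calc
    f k ≤ f (τ i) := hf hki
    _ ≤ g i := hfg i
    _ ≤ g k := hg hik

theorem comp_sort_le_comp_of_le {n : ℕ} {α : Type*} [LinearOrder α] {u v : Fin n → α}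
    {σ : Equiv.Perm (Fin n)} (huv : u ≤ v) (hv : Monotone (v ∘ σ)) :
    u ∘ Tuple.sort u ≤ v ∘ σ :=
  le_of_monotone_of_comp_injective_le (τ := (Tuple.sort u).symm ∘ σ) (Tuple.monotone_sort u) hv
    ((Tuple.sort u).symm.injective.comp σ.injective) fun i => by simpa using huv (σ i)

variable {n : ℕ} {α : Type*} [AddCommGroup α] [LinearOrder α] [IsOrderedAddMonoid α]
  {u v : Fin n → α} {c : α}

theorem comp_sort_le_comp_sort_add (h : ∀ i, u i ≤ v i + c) (k : Fin n) :
    (u ∘ Tuple.sort u) k ≤ (v ∘ Tuple.sort v) k + c :=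
  comp_sort_le_comp_of_le (v := fun i => v i + c) h ((Tuple.monotone_sort v).add_const c) k

theorem abs_comp_sort_sub_comp_sort_le (h : ∀ i, |u i - v i| ≤ c) (k : Fin n) :
    |(u ∘ Tuple.sort u) k - (v ∘ Tuple.sort v) k| ≤ c := by
  simp only [abs_sub_le_iff, sub_le_iff_le_add'] at h ⊢
  exact ⟨comp_sort_le_comp_sort_add (fun i => (h i).1) k,
    comp_sort_le_comp_sort_add (fun i => (h i).2) k⟩

end Sorting

/-- The strictly increasing pairs in `α`, which index the entries of a matrix above its diagonal;
they encode the two-element subsets of `α`. -/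
abbrev IncreasingPair (α : Type*) [LT α] : Type _ :=
  {p : α × α // p.1 < p.2}

namespace IncreasingPair

variable {α β : Type*} [LinearOrder α] [LinearOrder β]

/-- The action of an injective map on two-element subsets, encoded as increasing pairs: both
entries are mapped and then put back in increasing order. -/
def map (f : α ↪ β) (p : IncreasingPair α) : IncreasingPair β :=
  ⟨(min (f p.1.1) (f p.1.2), max (f p.1.1) (f p.1.2)), min_lt_max.2 (f.injective.ne p.2.ne)⟩

theorem map_symm_map (e : α ≃ β) (p : IncreasingPair α) :
    map e.symm.toEmbedding (map e.toEmbedding p) = p := by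
  obtain ⟨⟨a, b⟩, hab⟩ := p
  rcases le_total (e a) (e b) with h | h <;> simp [map, h, le_of_lt hab]

/-- The bijection between two-element subsets, encoded as increasing pairs, that a bijection
of the underlying types induces. -/
def congr (e : α ≃ β) : IncreasingPair α ≃ IncreasingPair β where
  toFun := map e.toEmbedding
  invFun := map e.symm.toEmbedding
  left_inv := map_symm_map e
  right_inv := map_symm_map e.symm

theorem apply_congr_of_symmetric {γ : Type*} {D : β → β → γ} (hD : ∀ i j, D i j = D j i)
    (e : α ≃ β) (p : IncreasingPair α) :
    D (congr e p).1.1 (congr e p).1.2 = D (e p.1.1) (e p.1.2) := by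
  rcases le_total (e p.1.1) (e p.1.2) with h | h <;> simp [congr, map, h, hD (e p.1.1)]

end IncreasingPair

section SDV

variable {h : ℕ}

theorem SDV_comp_perm {D : Fin h → Fin h → ℝ} (hD : ∀ i j, D i j = D j i)
    (ξ : Equiv.Perm (Fin h)) :
    SDV (fun i j => D (ξ i) (ξ j)) = SDV D := by
  let e := Fintype.equivFin (IncreasingPair (Fin h))
  let v : Fin (Fintype.card (IncreasingPair (Fin h))) → ℝ :=
    fun i => D (e.symm i).1.1 (e.symm i).1.2
  let σ := e.permCongr (IncreasingPair.congr ξ)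
  have hσ : (fun i => D (ξ (e.symm i).1.1) (ξ (e.symm i).1.2)) = v ∘ σ := funext fun i => by
    simp [v, σ, Equiv.permCongr_apply, IncreasingPair.apply_congr_of_symmetric hD]
  calc
    SDV (fun i j => D (ξ i) (ξ j)) = (v ∘ σ) ∘ Tuple.sort (v ∘ σ) := by rw [← hσ]; rfl
    _ = v ∘ Tuple.sort v := Tuple.comp_perm_comp_sort_eq_comp_sort
    _ = SDV D := rfl

theorem norm_SDV_sub_SDV_le (D D' : Fin h → Fin h → ℝ) :
    ‖SDV D - SDV D'‖ ≤ ‖fun p : IncreasingPair (Fin h) => |D p.1.1 p.1.2 - D' p.1.1 p.1.2|‖ := by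
  let d : IncreasingPair (Fin h) → ℝ := fun p => |D p.1.1 p.1.2 - D' p.1.1 p.1.2|
  have hd (p : IncreasingPair (Fin h)) : d p ≤ ‖d‖ :=
    (Real.le_norm_self _).trans (norm_le_pi_norm d p)
  exact (pi_norm_le_iff_of_nonneg (norm_nonneg d)).2 <|
    abs_comp_sort_sub_comp_sort_le fun i => hd ((Fintype.equivFin _).symm i)

theorem SDV_lower_bound_general {D : Fin h → Fin h → ℝ} (hD : ∀ i j, D i j = D j i)
    (D' : Fin h → Fin h → ℝ) :
    ‖SDV D - SDV D'‖ ≤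
      Finset.univ.inf' Finset.univ_nonempty fun ξ : Equiv.Perm (Fin h) =>
        ‖fun p : IncreasingPair (Fin h) => |D (ξ p.1.1) (ξ p.1.2) - D' p.1.1 p.1.2|‖ :=
  Finset.le_inf' _ _ fun ξ _ => by
    rw [← SDV_comp_perm hD ξ]
    exact norm_SDV_sub_SDV_le _ D'

end SDV

/-- For symmetric matrices `D, D'` with zero diagonal, the minimum over permutations `ξ`
of `max_{i < j} |D (ξ i) (ξ j) - D' i j|` (expressed as the sup norm over the strictly
increasing pairs) is at least `‖SDV(D) - SDV(D')‖_∞`. -/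
theorem SDV_lower_bound {h : ℕ} (D D' : Fin h → Fin h → ℝ)
    (hDsymm : ∀ i j, D i j = D j i) (hD'symm : ∀ i j, D' i j = D' j i)
    (hDdiag : ∀ i, D i i = 0) (hD'diag : ∀ i, D' i i = 0) :
    ‖SDV D - SDV D'‖ ≤
      Finset.univ.inf' Finset.univ_nonempty fun ξ : Equiv.Perm (Fin h) =>
        ‖fun p : {p : Fin h × Fin h // p.1 < p.2} =>
          |D (ξ p.1.1) (ξ p.1.2) - D' p.1.1 p.1.2|‖ :=
  SDV_lower_bound_general hDsymm D'
end

section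
/- Let R, R' : Fin h → Fin k → ℝ be matrices. For each column j, let a_j = (1/h) · Σ_i R i j be the column average of R, and let a'_j be the column average of R'; let sort(a), sort(a') ∈ ℝ^k be these vectors of column averages written in increasing order. Then min over permutations ξ of Fin h and τ of Fin k of max over i, j of |R (ξ i) (τ j) − R' i j| ≥ ‖sort(a) − sort(a')‖_∞. -/
/-- `sortVec v` rearranges the coordinates of a vector `v ∈ ℝ^k` in increasing order. -/
noncomputable def sortVec {k : ℕ} (v : Fin k → ℝ) : Fin k → ℝ := v ∘ ⇑(Tuple.sort v)

/-!
Counting from `0`, the `j`-th smallest coordinate of `v` is at most `a` exactly when more than `j`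
coordinates of `v` are, so sorting is monotone. It also commutes with adding a constant, so
`v ≤ w + c` gives `sort v ≤ sort w + c`: sorting is nonexpansive for the sup norm. Averaging the
rows of a matrix is nonexpansive as well. Permuting the rows of a matrix preserves its column
averages, and permuting its columns preserves their sorted vector, so every pair of permutations
gives the bound.
-/

open Finset
open scoped BigOperators

section CompSort

variable {α : Type*} [LinearOrder α] {k : ℕ}

lemma comp_sort_apply_le_iff (v : Fin k → α) (a : α) (j : Fin k) :
    (v ∘ Tuple.sort v) j ≤ a ↔ (j : ℕ) < #{i | v i ≤ a} := by
  have card_eq : #{i | (v ∘ Tuple.sort v) i ≤ a} = #{i | v i ≤ a} :=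
    card_equiv (Tuple.sort v) (by simp)
  rw [← card_eq, Tuple.lt_card_le_iff_apply_le_of_monotone (Tuple.monotone_sort v)]

lemma monotone_comp_sort : Monotone fun v : Fin k → α ↦ v ∘ Tuple.sort v := by
  intro v w hvw j
  rw [comp_sort_apply_le_iff]
  calc (j : ℕ) < #{i | w i ≤ (w ∘ Tuple.sort w) j} := (comp_sort_apply_le_iff w _ j).1 le_rfl
    _ ≤ #{i | v i ≤ (w ∘ Tuple.sort w) j} :=
      card_le_card (monotone_filter_right _ fun i _ hi ↦ (hvw i).trans hi)

lemma comp_sort_of_monotone {β : Type*} [LinearOrder β] {f : α → β} (hf : Monotone f)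
    (v : Fin k → α) : (f ∘ v) ∘ Tuple.sort (f ∘ v) = f ∘ v ∘ Tuple.sort v :=
  (Tuple.comp_sort_eq_comp_iff_monotone.2 (hf.comp (Tuple.monotone_sort v))).symm

end CompSort

section SortVec

variable {k : ℕ} (v w : Fin k → ℝ)

lemma sortVec_comp_perm (τ : Equiv.Perm (Fin k)) : sortVec (v ∘ τ) = sortVec v :=
  Tuple.comp_perm_comp_sort_eq_comp_sort

lemma sortVec_apply_sub_le (j : Fin k) : sortVec v j - sortVec w j ≤ ‖v - w‖ := by
  have shift : sortVec ((· + ‖v - w‖) ∘ w) = (· + ‖v - w‖) ∘ sortVec w :=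
    comp_sort_of_monotone add_left_mono w
  have le_shift : v ≤ (· + ‖v - w‖) ∘ w := fun i ↦
    sub_le_iff_le_add'.1 ((le_abs_self _).trans (norm_le_pi_norm (v - w) i))
  have sort_le : sortVec v j ≤ sortVec ((· + ‖v - w‖) ∘ w) j := monotone_comp_sort le_shift j
  rw [shift] at sort_le
  exact sub_le_iff_le_add'.2 sort_le

lemma norm_sortVec_sub_le : ‖sortVec v - sortVec w‖ ≤ ‖v - w‖ := by
  refine (pi_norm_le_iff_of_nonneg (norm_nonneg _)).2 fun j ↦ abs_sub_le_iff.2 ⟨?_, ?_⟩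
  · exact sortVec_apply_sub_le v w j
  · exact norm_sub_rev v w ▸ sortVec_apply_sub_le w v j

end SortVec

section Average

variable {ι κ E : Type*} [Fintype ι]

lemma norm_expect_le_pi_norm [SeminormedAddCommGroup E] [NormedSpace ℝ E] [Module ℚ≥0 E]
    (u : ι → E) : ‖𝔼 i, u i‖ ≤ ‖u‖ := by
  have norm_smul_eq (q : ℚ≥0) (x : E) : ‖q • x‖ = q • ‖x‖ := by
    rw [← NNRat.cast_smul_eq_nnqsmul ℝ, ← NNRat.cast_smul_eq_nnqsmul ℝ, norm_smul,
      Real.norm_of_nonneg q.cast_nonneg, smul_eq_mul]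
  cases isEmpty_or_nonempty ι
  · simp
  · calc ‖𝔼 i, u i‖ ≤ 𝔼 i, ‖u i‖ :=
        le_expect_of_subadditive norm_zero norm_add_le fun n ↦ norm_smul_eq (n : ℚ≥0)⁻¹
      _ ≤ ‖u‖ := expect_le univ_nonempty fun i _ ↦ norm_le_pi_norm u i

lemma pi_norm_uncurry [Fintype κ] [SeminormedAddGroup E] (f : ι → κ → E) :
    ‖Function.uncurry f‖ = ‖f‖ := by
  simp only [Pi.norm_def, Pi.nnnorm_def, ← univ_product_univ, sup_product_left,
    Function.uncurry_apply_pair]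

lemma pi_norm_congr {F : Type*} [SeminormedAddGroup E] [SeminormedAddGroup F]
    {u : ι → E} {v : ι → F} (h : ∀ i, ‖u i‖ = ‖v i‖) : ‖u‖ = ‖v‖ := by
  have nnnorm_eq (i : ι) : ‖u i‖₊ = ‖v i‖₊ := NNReal.eq (h i)
  simp only [Pi.norm_def, nnnorm_eq]

end Average

lemma norm_sortVec_expect_sub_le {ι ι' : Type*} [Fintype ι] [Fintype ι'] {k : ℕ}
    (R : ι → Fin k → ℝ) (R' : ι' → Fin k → ℝ) (ξ : ι' ≃ ι) (τ : Equiv.Perm (Fin k)) :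
    ‖sortVec (𝔼 i, R i) - sortVec (𝔼 i, R' i)‖ ≤ ‖fun i j ↦ R (ξ i) (τ j) - R' i j‖ := by
  have expect_perm : (𝔼 i, R i) ∘ τ = 𝔼 i, R (ξ i) ∘ τ := by
    rw [← Fintype.expect_equiv ξ (fun i ↦ R (ξ i)) R fun _ ↦ rfl]
    exact map_expect (LinearMap.funLeft ℚ≥0 ℝ τ) _ _
  calc ‖sortVec (𝔼 i, R i) - sortVec (𝔼 i, R' i)‖
      = ‖sortVec ((𝔼 i, R i) ∘ τ) - sortVec (𝔼 i, R' i)‖ := by rw [sortVec_comp_perm]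
    _ ≤ ‖(𝔼 i, R i) ∘ τ - 𝔼 i, R' i‖ := norm_sortVec_sub_le _ _
    _ = ‖𝔼 i, (R (ξ i) ∘ τ - R' i)‖ := by rw [expect_perm, expect_sub_distrib]
    _ ≤ ‖fun i j ↦ R (ξ i) (τ j) - R' i j‖ := norm_expect_le_pi_norm _

/-- For matrices `R, R' : Fin (h+1) → Fin (k+1) → ℝ`, the minimum over permutations
`ξ` of the rows and `τ` of the columns of `max_{i,j} |R (ξ i) (τ j) - R' i j|`
(expressed as the sup norm over pairs `(i, j)`) is at least the sup-norm distance between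
the sorted vectors of column averages of `R` and of `R'`. -/
theorem column_averages_lower_bound {h k : ℕ} (R R' : Fin (h + 1) → Fin (k + 1) → ℝ) :
    ‖sortVec (fun j => ((h : ℝ) + 1)⁻¹ * ∑ i, R i j) -
        sortVec (fun j => ((h : ℝ) + 1)⁻¹ * ∑ i, R' i j)‖ ≤
      Finset.univ.inf' Finset.univ_nonempty
        fun ξτ : Equiv.Perm (Fin (h + 1)) × Equiv.Perm (Fin (k + 1)) =>
          ‖fun p : Fin (h + 1) × Fin (k + 1) =>
            |R (ξτ.1 p.1) (ξτ.2 p.2) - R' p.1 p.2|‖ := by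
  have average_eq (M : Fin (h + 1) → Fin (k + 1) → ℝ) :
      (fun j ↦ ((h : ℝ) + 1)⁻¹ * ∑ i, M i j) = 𝔼 i, M i := by
    ext j
    simp [Fintype.expect_eq_sum_div_card, div_eq_inv_mul]
  refine le_inf' _ _ fun ⟨ξ, τ⟩ _ ↦ ?_
  let D : Fin (h + 1) → Fin (k + 1) → ℝ := fun i j ↦ R (ξ i) (τ j) - R' i j
  calc _ = ‖sortVec (𝔼 i, R i) - sortVec (𝔼 i, R' i)‖ := by rw [average_eq, average_eq]
    _ ≤ ‖D‖ := norm_sortVec_expect_sub_le R R' ξ τ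
    _ = ‖Function.uncurry D‖ := (pi_norm_uncurry D).symm
    _ = ‖fun p ↦ |Function.uncurry D p|‖ := pi_norm_congr fun p ↦ (norm_abs_eq_norm _).symm
end

section
/- Let B : Fin k → ℝ^N and D : Fin l → ℝ^N be finite families of vectors with nonnegative weights w : Fin k → ℝ and w' : Fin l → ℝ satisfying Σ_i w i = 1 and Σ_j w' j = 1. Let f : Fin k → Fin l → ℝ be any flow with f i j ≥ 0, Σ_j f i j ≤ w i for every i, Σ_i f i j ≤ w' j for every j, and Σ_{i,j} f i j = 1. Then Σ_{i,j} f i j · ‖B i − D j‖_∞ ≥ ‖Σ_i (w i) • B i − Σ_j (w' j) • D j‖_∞; consequently the Earth Mover's Distance (the minimum of the left-hand side over all such flows) is at least the ‖·‖_∞-distance between the weighted centroids of the two distributions. -/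
/-!
The row sums of a flow are bounded by the weights `w i` and have the same total as the weights, so
each of them equals `w i`; likewise each column sum equals `w' j`. The difference of the centroids
is therefore `∑ i, ∑ j, f i j • (B i - D j)`, and the triangle inequality bounds its norm by the
cost of the flow.
-/

/-- A flow of total mass `m` from the weights `w` to the weights `w'`, as in the definition of the
Earth Mover's Distance. The marginals are only bounded by the weights, so for weights of larger
total mass this is a partial transport plan. -/
structure IsFlow {ι κ : Type*} [Fintype ι] [Fintype κ] (w : ι → ℝ) (w' : κ → ℝ) (m : ℝ)
    (f : ι → κ → ℝ) : Prop where
  nonneg : ∀ i j, 0 ≤ f i j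
  row_le : ∀ i, ∑ j, f i j ≤ w i
  col_le : ∀ j, ∑ i, f i j ≤ w' j
  total_eq : ∑ i, ∑ j, f i j = m

/-- The cost of the flow `f` when moving a unit of mass from `i` to `j` costs `d i j`. -/
def flowCost {ι κ : Type*} [Fintype ι] [Fintype κ] (d f : ι → κ → ℝ) : ℝ :=
  ∑ i, ∑ j, f i j * d i j

/-- The Earth Mover's Distance between the weights `w` and `w'` for the ground distance `d`, as the
infimum of the costs of flows of total mass `m`. It has the junk value `0` if there is no such
flow. -/
noncomputable def earthMoverDist {ι κ : Type*} [Fintype ι] [Fintype κ] (d : ι → κ → ℝ)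
    (w : ι → ℝ) (w' : κ → ℝ) (m : ℝ) : ℝ :=
  sInf {c : ℝ | ∃ f, IsFlow w w' m f ∧ c = flowCost d f}

section Flow

variable {ι κ : Type*} [Fintype ι] [Fintype κ] {w : ι → ℝ} {w' : κ → ℝ} {m : ℝ} {f : ι → κ → ℝ}

theorem isFlow_iff :
    IsFlow w w' m f ↔ (∀ i j, 0 ≤ f i j) ∧ (∀ i, ∑ j, f i j ≤ w i) ∧ (∀ j, ∑ i, f i j ≤ w' j) ∧
      ∑ i, ∑ j, f i j = m :=
  ⟨fun ⟨h0, hrow, hcol, htot⟩ => ⟨h0, hrow, hcol, htot⟩,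
    fun ⟨h0, hrow, hcol, htot⟩ => ⟨h0, hrow, hcol, htot⟩⟩

theorem IsFlow.swap (hf : IsFlow w w' m f) : IsFlow w' w m fun j i => f i j where
  nonneg j i := hf.nonneg i j
  row_le := hf.col_le
  col_le := hf.row_le
  total_eq := Finset.sum_comm.trans hf.total_eq

theorem IsFlow.row_eq (hf : IsFlow w w' m f) (hw : ∑ i, w i = m) (i : ι) :
    ∑ j, f i j = w i :=
  (Finset.sum_eq_sum_iff_of_le fun i _ => hf.row_le i).1 (hf.total_eq.trans hw.symm) i
    (Finset.mem_univ i)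

theorem IsFlow.col_eq (hf : IsFlow w w' m f) (hw' : ∑ j, w' j = m) (j : κ) :
    ∑ i, f i j = w' j :=
  hf.swap.row_eq hw' j

theorem le_earthMoverDist {d : ι → κ → ℝ} {a : ℝ} (hne : ∃ f, IsFlow w w' m f)
    (ha : ∀ f, IsFlow w w' m f → a ≤ flowCost d f) : a ≤ earthMoverDist d w w' m := by
  obtain ⟨f, hf⟩ := hne
  refine le_csInf ⟨flowCost d f, f, hf, rfl⟩ ?_
  rintro _ ⟨g, hg, rfl⟩
  exact ha g hg

end Flow

theorem sum_sum_smul_sub {ι κ R E : Type*} [Fintype ι] [Fintype κ] [Semiring R] [AddCommGroup E]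
    [Module R E] (f : ι → κ → R) (B : ι → E) (D : κ → E) :
    ∑ i, ∑ j, f i j • (B i - D j) =
      ∑ i, (∑ j, f i j) • B i - ∑ j, (∑ i, f i j) • D j := by
  simp only [smul_sub, Finset.sum_sub_distrib, Finset.sum_smul]
  rw [Finset.sum_comm (f := fun i j => f i j • D j)]

section Centroid

variable {ι κ E : Type*} [Fintype ι] [Fintype κ] [SeminormedAddCommGroup E] [NormedSpace ℝ E]
  {w : ι → ℝ} {w' : κ → ℝ} {m : ℝ} {f : ι → κ → ℝ}

theorem norm_sum_sum_smul_le_flowCost (hf : ∀ i j, 0 ≤ f i j) (v : ι → κ → E) :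
    ‖∑ i, ∑ j, f i j • v i j‖ ≤ flowCost (fun i j => ‖v i j‖) f :=
  norm_sum_le_of_le _ fun i _ => norm_sum_le_of_le _ fun j _ =>
    (norm_smul_of_nonneg (hf i j) (v i j)).le

theorem IsFlow.norm_centroid_sub_le_flowCost (hf : IsFlow w w' m f) (hw : ∑ i, w i = m)
    (hw' : ∑ j, w' j = m) (B : ι → E) (D : κ → E) :
    ‖(∑ i, w i • B i) - ∑ j, w' j • D j‖ ≤ flowCost (fun i j => ‖B i - D j‖) f := by
  simpa only [sum_sum_smul_sub, hf.row_eq hw, hf.col_eq hw'] using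
    norm_sum_sum_smul_le_flowCost hf.nonneg fun i j => B i - D j

theorem EMD_centroid_lower_bound_general (B : ι → E) (D : κ → E) (hw : ∑ i, w i = m)
    (hw' : ∑ j, w' j = m) (hf : IsFlow w w' m f) :
    ‖(∑ i, w i • B i) - ∑ j, w' j • D j‖ ≤ flowCost (fun i j => ‖B i - D j‖) f ∧
    ‖(∑ i, w i • B i) - ∑ j, w' j • D j‖ ≤ earthMoverDist (fun i j => ‖B i - D j‖) w w' m :=
  ⟨hf.norm_centroid_sub_le_flowCost hw hw' B D,
    le_earthMoverDist ⟨f, hf⟩ fun _ hg => hg.norm_centroid_sub_le_flowCost hw hw' B D⟩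

end Centroid

/-- For weighted families `B : Fin k → ℝ^N`, `D : Fin l → ℝ^N` (with the sup norm on
`Fin N → ℝ`) whose nonnegative weights `w, w'` sum to `1`, any flow `f` (nonnegative, with
row sums at most `w i`, column sums at most `w' j`, and total sum `1`) has cost
`∑_{i,j} f i j * ‖B i - D j‖_∞` at least the `‖·‖_∞`-distance between the weighted
centroids `∑ i, w i • B i` and `∑ j, w' j • D j`; consequently the Earth Mover's Distance
(the infimum of the cost over all such flows) is at least this distance of centroids. -/
theorem EMD_centroid_lower_bound {k l N : ℕ}
    (B : Fin k → (Fin N → ℝ)) (D : Fin l → (Fin N → ℝ))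
    (w : Fin k → ℝ) (w' : Fin l → ℝ)
    (hw : ∀ i, 0 ≤ w i) (hw' : ∀ j, 0 ≤ w' j)
    (hw1 : ∑ i, w i = 1) (hw'1 : ∑ j, w' j = 1)
    (f : Fin k → Fin l → ℝ) (hf0 : ∀ i j, 0 ≤ f i j)
    (hrow : ∀ i, ∑ j, f i j ≤ w i) (hcol : ∀ j, ∑ i, f i j ≤ w' j)
    (htot : ∑ i, ∑ j, f i j = 1) :
    ‖(∑ i, w i • B i) - ∑ j, w' j • D j‖ ≤ ∑ i, ∑ j, f i j * ‖B i - D j‖ ∧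
    ‖(∑ i, w i • B i) - ∑ j, w' j • D j‖ ≤
      sInf {c : ℝ | ∃ g : Fin k → Fin l → ℝ, (∀ i j, 0 ≤ g i j) ∧
        (∀ i, ∑ j, g i j ≤ w i) ∧ (∀ j, ∑ i, g i j ≤ w' j) ∧
        (∑ i, ∑ j, g i j = 1) ∧ c = ∑ i, ∑ j, g i j * ‖B i - D j‖} := by
  simpa only [earthMoverDist, flowCost, isFlow_iff, and_assoc] using
    EMD_centroid_lower_bound_general B D hw1 hw'1 ⟨hf0, hrow, hcol, htot⟩
end

section
/- Let S₋ = {(−2,0,−2), (2,0,2), (−1,−1,0), (1,1,0), (0,1,−1)} and S₊ = {(−2,0,−2), (2,0,2), (−1,−1,0), (1,1,0), (0,1,1)} be 5-point subsets of Euclidean ℝ³. Then there is no isometry f : ℝ³ → ℝ³ with f(S₋) = S₊; indeed S₊ contains three points whose pairwise Euclidean distances are √2, √6, √6, while S₋ contains no such triple. -/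
/-- A point of Euclidean space `ℝ³` with given coordinates. -/
noncomputable def pt3 (x y z : ℝ) : EuclideanSpace ℝ (Fin 3) :=
  (WithLp.equiv 2 (Fin 3 → ℝ)).symm ![x, y, z]

/-- The 5-point cloud `S₋ = {(−2,0,−2), (2,0,2), (−1,−1,0), (1,1,0), (0,1,−1)}`. -/
noncomputable def Sminus : Set (EuclideanSpace ℝ (Fin 3)) :=
  {pt3 (-2) 0 (-2), pt3 2 0 2, pt3 (-1) (-1) 0, pt3 1 1 0, pt3 0 1 (-1)}

/-- The 5-point cloud `S₊ = {(−2,0,−2), (2,0,2), (−1,−1,0), (1,1,0), (0,1,1)}`. -/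
noncomputable def Splus : Set (EuclideanSpace ℝ (Fin 3)) :=
  {pt3 (-2) 0 (-2), pt3 2 0 2, pt3 (-1) (-1) 0, pt3 1 1 0, pt3 0 1 1}

/-!
Isometries preserve distances, hence isosceles triangles with prescribed base and legs. In `S₊` the
points `(1,1,0)`, `(0,1,1)` at distance `√2` form the base of such a triangle with apex `(2,0,2)`
and legs `√6`. In `S₋` the only points at distance `√2` are `(1,1,0)` and `(0,1,-1)`, and the only
point at distance `√6` from `(1,1,0)` is `(2,0,2)`, which is at distance `√14` from `(0,1,-1)`.
-/

section IsoscelesTriangle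

variable {X Y : Type*} [PseudoMetricSpace X] [PseudoMetricSpace Y]

/-- The set `S` contains the vertices of an isosceles triangle with the given base and leg
lengths. The vertices are labelled with the base first and the apex last, which replaces the
unordered triple of distances by three equations. -/
def HasIsoscelesTriangle (S : Set X) (base leg : ℝ) : Prop :=
  ∃ p ∈ S, ∃ q ∈ S, ∃ r ∈ S, dist p q = base ∧ dist p r = leg ∧ dist q r = leg

theorem hasIsoscelesTriangle_image_iff {f : X → Y} (hf : Isometry f) {S : Set X}
    {base leg : ℝ} :
    HasIsoscelesTriangle (f '' S) base leg ↔ HasIsoscelesTriangle S base leg := by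
  simp only [HasIsoscelesTriangle, Set.exists_mem_image, hf.dist_eq]

theorem multiset_triple_eq_isosceles_iff {α : Type*} {x y z a b : α} :
    ({x, y, z} : Multiset α) = {a, b, b} ↔
      (x = a ∧ y = b ∧ z = b) ∨ (y = a ∧ x = b ∧ z = b) ∨ (z = a ∧ x = b ∧ y = b) := by
  have cancel_apex {u v w : α} (h : ({u, v, w} : Multiset α) = {u, b, b}) : v = b ∧ w = b := by
    have hvw : ({v, w} : Multiset α) = {b, b} := (Multiset.cons_inj_right u).1 h
    have hb : ∀ t ∈ ({v, w} : Multiset α), t = b := by simp [hvw]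
    exact ⟨hb v (by simp), hb w (by simp)⟩
  have rotate {u v w : α} : ({u, v, w} : Multiset α) = {w, u, v} :=
    (congrArg (u ::ₘ ·) (Multiset.pair_comm v w)).trans (Multiset.cons_swap u w {v})
  constructor
  · intro h
    have ha : a ∈ ({x, y, z} : Multiset α) := h ▸ Multiset.mem_cons_self a {b, b}
    simp only [Multiset.insert_eq_cons, Multiset.mem_cons, Multiset.mem_singleton] at ha
    rcases ha with rfl | rfl | rfl
    · exact .inl ⟨rfl, cancel_apex h⟩
    · exact .inr (.inl ⟨rfl, cancel_apex ((Multiset.cons_swap _ _ _).trans h)⟩)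
    · exact .inr (.inr ⟨rfl, cancel_apex (rotate.symm.trans h)⟩)
  · rintro (⟨rfl, rfl, rfl⟩ | ⟨rfl, rfl, rfl⟩ | ⟨rfl, rfl, rfl⟩)
    · rfl
    · exact Multiset.cons_swap _ _ _
    · exact rotate

theorem exists_distances_eq_iff_hasIsoscelesTriangle {S : Set X} {base leg : ℝ} :
    (∃ p ∈ S, ∃ q ∈ S, ∃ r ∈ S,
        ({dist p q, dist p r, dist q r} : Multiset ℝ) = {base, leg, leg}) ↔
      HasIsoscelesTriangle S base leg := by
  simp only [multiset_triple_eq_isosceles_iff]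
  constructor
  · rintro ⟨p, hp, q, hq, r, hr, h | ⟨hpr, hpq, hqr⟩ | ⟨hqr, hpq, hpr⟩⟩
    · exact ⟨p, hp, q, hq, r, hr, h⟩
    · exact ⟨p, hp, r, hr, q, hq, hpr, hpq, dist_comm r q ▸ hqr⟩
    · exact ⟨q, hq, r, hr, p, hp, hqr, dist_comm q p ▸ hpq, dist_comm r p ▸ hpr⟩
  · rintro ⟨p, hp, q, hq, r, hr, h⟩
    exact ⟨p, hp, q, hq, r, hr, .inl h⟩

end IsoscelesTriangle

theorem dist_pt3 (a b c x y z : ℝ) :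
    dist (pt3 a b c) (pt3 x y z) = √((a - x) ^ 2 + (b - y) ^ 2 + (c - z) ^ 2) := by
  simp [EuclideanSpace.dist_eq, pt3, Fin.sum_univ_three, Real.dist_eq]

theorem dist_pt3_eq_sqrt_iff {a b c x y z d : ℝ} (hd : 0 ≤ d) :
    dist (pt3 a b c) (pt3 x y z) = √d ↔ (a - x) ^ 2 + (b - y) ^ 2 + (c - z) ^ 2 = d := by
  rw [dist_pt3, Real.sqrt_inj (by positivity) hd]

theorem hasIsoscelesTriangle_Splus : HasIsoscelesTriangle Splus √2 √6 := by
  refine ⟨pt3 1 1 0, by simp [Splus], pt3 0 1 1, by simp [Splus], pt3 2 0 2, by simp [Splus],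
    ?_, ?_, ?_⟩ <;>
  · rw [dist_pt3]
    norm_num

theorem eq_of_mem_Sminus_of_dist_eq_sqrt_two {p q : EuclideanSpace ℝ (Fin 3)}
    (hp : p ∈ Sminus) (hq : q ∈ Sminus) (hpq : dist p q = √2) :
    (p = pt3 1 1 0 ∧ q = pt3 0 1 (-1)) ∨ (p = pt3 0 1 (-1) ∧ q = pt3 1 1 0) := by
  rcases hp with rfl | rfl | rfl | rfl | rfl <;>
  rcases hq with rfl | rfl | rfl | rfl | rfl <;>
  first
  | exact .inl ⟨rfl, rfl⟩
  | exact .inr ⟨rfl, rfl⟩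
  | norm_num [dist_pt3_eq_sqrt_iff, -dist_self] at hpq

theorem eq_of_mem_Sminus_of_dist_pt3_one_one_zero_eq_sqrt_six {r : EuclideanSpace ℝ (Fin 3)}
    (hr : r ∈ Sminus) (h : dist (pt3 1 1 0) r = √6) : r = pt3 2 0 2 := by
  rcases hr with rfl | rfl | rfl | rfl | rfl <;>
  first
  | rfl
  | norm_num [dist_pt3_eq_sqrt_iff, -dist_self] at h

theorem not_hasIsoscelesTriangle_Sminus : ¬ HasIsoscelesTriangle Sminus √2 √6 := by
  rintro ⟨p, hp, q, hq, r, hr, hpq, hpr, hqr⟩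
  have no_apex (h₁ : dist (pt3 1 1 0) r = √6) (h₂ : dist (pt3 0 1 (-1)) r = √6) : False := by
    obtain rfl := eq_of_mem_Sminus_of_dist_pt3_one_one_zero_eq_sqrt_six hr h₁
    norm_num [dist_pt3_eq_sqrt_iff] at h₂
  rcases eq_of_mem_Sminus_of_dist_eq_sqrt_two hp hq hpq with ⟨rfl, rfl⟩ | ⟨rfl, rfl⟩
  · exact no_apex hpr hqr
  · exact no_apex hqr hpr

/-- No isometry of `ℝ³` (a distance-preserving bijection) maps `S₋` onto `S₊`: indeed,
`S₊` contains three points whose pairwise Euclidean distances are `√2, √6, √6`, while `S₋`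
contains no such triple. -/
theorem Sminus_not_isometric_Splus :
    (¬ ∃ f : EuclideanSpace ℝ (Fin 3) → EuclideanSpace ℝ (Fin 3),
        Function.Bijective f ∧ (∀ p q, dist (f p) (f q) = dist p q) ∧
        f '' Sminus = Splus) ∧
    (∃ p ∈ Splus, ∃ q ∈ Splus, ∃ r ∈ Splus,
        ({dist p q, dist p r, dist q r} : Multiset ℝ)
          = {Real.sqrt 2, Real.sqrt 6, Real.sqrt 6}) ∧
    ¬ ∃ p ∈ Sminus, ∃ q ∈ Sminus, ∃ r ∈ Sminus,
        ({dist p q, dist p r, dist q r} : Multiset ℝ)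
          = {Real.sqrt 2, Real.sqrt 6, Real.sqrt 6} := by
  simp only [exists_distances_eq_iff_hasIsoscelesTriangle]
  refine ⟨?_, hasIsoscelesTriangle_Splus, not_hasIsoscelesTriangle_Sminus⟩
  rintro ⟨f, -, hf, himage⟩
  have hSplus : HasIsoscelesTriangle (f '' Sminus) √2 √6 := himage ▸ hasIsoscelesTriangle_Splus
  exact not_hasIsoscelesTriangle_Sminus
    ((hasIsoscelesTriangle_image_iff (Isometry.of_dist_eq hf)).1 hSplus)
end

section
/- Let Q₋ = {(−2,0,−2), (2,0,2), (−1,−1,0), (1,1,0), (−1,2,0), (1,2,0), (0,0,−1)} and Q₊ = {(−2,0,−2), (2,0,2), (−1,−1,0), (1,1,0), (−1,2,0), (1,2,0), (0,0,1)} be 7-point subsets of Euclidean ℝ³. Then there is no isometry f : ℝ³ → ℝ³ with f(Q₋) = Q₊. -/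
/-- The 7-point cloud
`Q₋ = {(−2,0,−2), (2,0,2), (−1,−1,0), (1,1,0), (−1,2,0), (1,2,0), (0,0,−1)}`. -/
noncomputable def Qminus : Set (EuclideanSpace ℝ (Fin 3)) :=
  {pt3 (-2) 0 (-2), pt3 2 0 2, pt3 (-1) (-1) 0, pt3 1 1 0,
   pt3 (-1) 2 0, pt3 1 2 0, pt3 0 0 (-1)}

/-- The 7-point cloud
`Q₊ = {(−2,0,−2), (2,0,2), (−1,−1,0), (1,1,0), (−1,2,0), (1,2,0), (0,0,1)}`. -/
noncomputable def Qplus : Set (EuclideanSpace ℝ (Fin 3)) :=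
  {pt3 (-2) 0 (-2), pt3 2 0 2, pt3 (-1) (-1) 0, pt3 1 1 0,
   pt3 (-1) 2 0, pt3 1 2 0, pt3 0 0 1}

/-!
In `Q₋` one can walk from `(1,1,0)` to `(1,2,0)` to `(−2,0,−2)` to `(0,0,−1)`, with steps of squared
lengths `1`, `17`, `5`. In `Q₊` a walk starting with squared lengths `1`, `17` has to end at
`(−2,0,−2)`, and no point of `Q₊` is at squared distance `5` from there.
-/

/-- The isometry invariant that separates `Q₋` from `Q₊`: the space contains a walk of three steps
whose successive squared lengths are `a`, `b`, `c`. Squares keep the lengths rational here. -/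
def HasWalkOfDistSq (X : Type*) [PseudoMetricSpace X] (a b c : ℝ) : Prop :=
  ∃ p q r s : X, dist p q ^ 2 = a ∧ dist q r ^ 2 = b ∧ dist r s ^ 2 = c

lemma HasWalkOfDistSq.of_isometry {X Y : Type*} [PseudoMetricSpace X] [PseudoMetricSpace Y]
    {a b c : ℝ} {f : X → Y} (h : HasWalkOfDistSq X a b c) (hf : Isometry f) :
    HasWalkOfDistSq Y a b c := by
  obtain ⟨p, q, r, s, hpq, hqr, hrs⟩ := h
  refine ⟨f p, f q, f r, f s, ?_, ?_, ?_⟩ <;> rwa [hf.dist_eq]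

lemma dist_sq_pt3 (a b c x y z : ℝ) :
    dist (pt3 a b c) (pt3 x y z) ^ 2 = (a - x) ^ 2 + (b - y) ^ 2 + (c - z) ^ 2 := by
  simp [pt3, EuclideanSpace.dist_sq_eq, Fin.sum_univ_three, Real.dist_eq, sq_abs]

lemma Qminus.hasWalkOfDistSq : HasWalkOfDistSq Qminus 1 17 5 := by
  refine ⟨⟨pt3 1 1 0, ?_⟩, ⟨pt3 1 2 0, ?_⟩, ⟨pt3 (-2) 0 (-2), ?_⟩, ⟨pt3 0 0 (-1), ?_⟩, ?_, ?_, ?_⟩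
  iterate 4 simp [Qminus]
  all_goals
    rw [Subtype.dist_eq, dist_sq_pt3]
    norm_num

namespace Qplus

lemma eq_or_eq_of_dist_sq_eq_one {p q : EuclideanSpace ℝ (Fin 3)} (hp : p ∈ Qplus)
    (hq : q ∈ Qplus) (h : dist p q ^ 2 = 1) : q = pt3 1 1 0 ∨ q = pt3 1 2 0 := by
  rcases hq with rfl | rfl | rfl | rfl | rfl | rfl | rfl
  on_goal 6 => exact .inr rfl
  on_goal 4 => exact .inl rfl
  all_goals
    rcases hp with rfl | rfl | rfl | rfl | rfl | rfl | rfl <;> norm_num [dist_sq_pt3] at h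

lemma dist_sq_one_one_zero_ne_seventeen {r : EuclideanSpace ℝ (Fin 3)} (hr : r ∈ Qplus) :
    dist (pt3 1 1 0) r ^ 2 ≠ 17 := by
  rcases hr with rfl | rfl | rfl | rfl | rfl | rfl | rfl <;> norm_num [dist_sq_pt3]

lemma eq_of_dist_sq_one_two_zero_eq_seventeen {r : EuclideanSpace ℝ (Fin 3)} (hr : r ∈ Qplus)
    (h : dist (pt3 1 2 0) r ^ 2 = 17) : r = pt3 (-2) 0 (-2) := by
  rcases hr with rfl | hr
  · rfl
  · rcases hr with rfl | rfl | rfl | rfl | rfl | rfl <;> norm_num [dist_sq_pt3] at h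

lemma dist_sq_neg_two_zero_neg_two_ne_five {s : EuclideanSpace ℝ (Fin 3)} (hs : s ∈ Qplus) :
    dist (pt3 (-2) 0 (-2)) s ^ 2 ≠ 5 := by
  rcases hs with rfl | rfl | rfl | rfl | rfl | rfl | rfl <;> norm_num [dist_sq_pt3]

lemma not_hasWalkOfDistSq : ¬ HasWalkOfDistSq Qplus 1 17 5 := by
  rintro ⟨⟨p, hp⟩, ⟨q, hq⟩, ⟨r, hr⟩, ⟨s, hs⟩, hpq, hqr, hrs⟩
  rw [Subtype.dist_eq] at hpq hqr hrs
  obtain rfl | rfl := eq_or_eq_of_dist_sq_eq_one hp hq hpq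
  · exact dist_sq_one_one_zero_ne_seventeen hr hqr
  · obtain rfl := eq_of_dist_sq_one_two_zero_eq_seventeen hr hqr
    exact dist_sq_neg_two_zero_neg_two_ne_five hs hrs

end Qplus

theorem Qminus_not_isometric_Qplus_general (f : Qminus → Qplus) : ¬ Isometry f := fun hf ↦
  Qplus.not_hasWalkOfDistSq (Qminus.hasWalkOfDistSq.of_isometry hf)

/-- No isometry of `ℝ³` (a distance-preserving bijection) maps `Q₋` onto `Q₊`. -/
theorem Qminus_not_isometric_Qplus :
    ¬ ∃ f : EuclideanSpace ℝ (Fin 3) → EuclideanSpace ℝ (Fin 3),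
        Function.Bijective f ∧ (∀ p q, dist (f p) (f q) = dist p q) ∧
        f '' Qminus = Qplus := by
  rintro ⟨f, -, hf, hQ⟩
  have hmaps : Set.MapsTo f Qminus Qplus := Set.mapsTo_iff_image_subset.2 hQ.subset
  exact Qminus_not_isometric_Qplus_general hmaps.restrict (.of_dist_eq fun p q ↦ hf p q)
end
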